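/- Let the setting be type A_N or type B_N, let (i_t,k_t), 1 ≤ t ≤ T, be a snake, and let (p_1,…,p_T) ∈ P̄_{(i_t,k_t)}. Let (j,ℓ) ∈ W be a point at which some p_t can be lowered (resp. raised), and let (p′_1,…,p′_T) be the tuple obtained by replacing that p_t with p_t𝒜_{j,ℓ}⁻¹ (resp. p_t𝒜_{j,ℓ}). Then ∏_{t=1}^T m(p′_t) = A_{j,ℓ}⁻¹ · ∏_{t=1}^T m(p_t) (resp. ∏_{t=1}^T m(p′_t) = A_{j,ℓ} · ∏_{t=1}^T m(p_t)) in the free abelian group M. -/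

import Mathlib

namespace Paper

/-- The ambient setting: type `A N` (with `N ≥ 1`) or type `B N ε`
(with `N ≥ 2` and `0 < ε < 1/2`). -/
inductive Setting where
  | A (N : ℕ)
  | B (N : ℕ) (ε : ℝ)

namespace Setting

/-- The rank `N`. -/
def N : Setting → ℕ
  | A n => n
  | B n _ => n

/-- Validity of the parameters of the setting. -/
def valid : Setting → Prop
  | A n => 1 ≤ n
  | B n ε => 2 ≤ n ∧ 0 < ε ∧ ε < 1 / 2

end Setting

/-- The numbers `r_i` : in type A all equal `1`; in type B, `r_N = 1` and `r_i = 2` for `i < N`. -/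
def rr : Setting → ℕ → ℕ
  | .A _, _ => 1
  | .B n _, j => if j = n then 1 else 2

/-- The set `X` in type `A_N`. -/
def XA (n : ℕ) : Set (ℕ × ℤ) :=
  {ik | 1 ≤ ik.1 ∧ ik.1 ≤ n ∧ ((ik.1 : ℤ) - ik.2) % 2 = 1}

/-- The set `X` in type `B_N`. -/
def XB (n : ℕ) : Set (ℕ × ℤ) :=
  {ik | (ik.1 = n ∧ ik.2 % 2 = 1) ∨ (1 ≤ ik.1 ∧ ik.1 < n ∧ ik.2 % 2 = 0)}

/-- The set `X ⊆ I × ℤ`. -/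
def X : Setting → Set (ℕ × ℤ)
  | .A n => XA n
  | .B n _ => XB n

/-- The set `W = {(i,k) : (i, k - r_i) ∈ X}`. -/
def W (S : Setting) : Set (ℕ × ℤ) :=
  {ik | (ik.1, ik.2 - (rr S ik.1 : ℤ)) ∈ X S}

/-- The `r`-th point of a path (a finite list of points of the plane). -/
def pt (p : List (ℝ × ℝ)) (r : ℕ) : ℝ × ℝ := p.getD r (0, 0)

/-- The set of paths `𝒫_{i,k}` in type `A_N`. -/
def pathsA (n : ℕ) (i : ℕ) (k : ℤ) : Set (List (ℝ × ℝ)) :=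
  {p | p.length = n + 2 ∧
    (∀ r, r < n + 2 → (pt p r).1 = (r : ℝ)) ∧
    (pt p 0).2 = (i : ℝ) + (k : ℝ) ∧
    (pt p (n + 1)).2 = (n : ℝ) + 1 - (i : ℝ) + (k : ℝ) ∧
    (∀ r, r ≤ n → (pt p (r + 1)).2 - (pt p r).2 = 1 ∨ (pt p (r + 1)).2 - (pt p r).2 = -1)}

/-- The set of paths `𝒫_{N,ℓ}` in type `B_N`. -/
def pathsBspin (n : ℕ) (ε : ℝ) (l : ℤ) : Set (List (ℝ × ℝ)) :=
  {p | p.length = n + 1 ∧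
    (if l % 4 = 3 then ∀ r, r < n → (pt p r).1 = 2 * (r : ℝ)
     else ∀ r, r < n → (pt p r).1 = 4 * (n : ℝ) - 2 - 2 * (r : ℝ)) ∧
    (pt p n).1 = 2 * (n : ℝ) - 1 ∧
    (pt p 0).2 = (l : ℝ) + 2 * (n : ℝ) - 1 ∧
    (∀ r, r + 2 ≤ n → (pt p (r + 1)).2 - (pt p r).2 = 2 ∨ (pt p (r + 1)).2 - (pt p r).2 = -2) ∧
    ((pt p n).2 - (pt p (n - 1)).2 = 1 + ε ∨ (pt p n).2 - (pt p (n - 1)).2 = -(1 + ε))}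

/-- The set of paths `𝒫_{i,k}` in type `B_N`. -/
def pathsB (n : ℕ) (ε : ℝ) (i : ℕ) (k : ℤ) : Set (List (ℝ × ℝ)) :=
  if i = n then pathsBspin n ε k
  else {p | ∃ a b : List (ℝ × ℝ),
    a ∈ pathsBspin n ε (k - (2 * (n : ℤ) - 2 * (i : ℤ) - 1)) ∧
    b ∈ pathsBspin n ε (k + (2 * (n : ℤ) - 2 * (i : ℤ) - 1)) ∧
    p = a ++ b.reverse ∧
    (pt a n).1 = (pt b n).1 ∧ 0 < (pt a n).2 - (pt b n).2}

/-- The set of paths `𝒫_{i,k}`. -/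
def P : Setting → ℕ → ℤ → Set (List (ℝ × ℝ))
  | .A n => pathsA n
  | .B n ε => pathsB n ε

/-- The map `ι : X → ℤ × ℤ` of type `B_N`. -/
def iotaB (n : ℕ) (ik : ℕ × ℤ) : ℤ × ℤ :=
  if ik.1 = n then (2 * (n : ℤ) - 1, ik.2)
  else if (2 * (n : ℤ) + ik.2 - 2 * (ik.1 : ℤ)) % 4 = 2 then (2 * (ik.1 : ℤ), ik.2)
  else (4 * (n : ℤ) - 2 - 2 * (ik.1 : ℤ), ik.2)

/-- The corners of a path: `Cp S p true` is the set `C_{p,+}` of upper corners, and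
`Cp S p false` is the set `C_{p,-}` of lower corners. -/
def Cp (S : Setting) (p : List (ℝ × ℝ)) (up : Bool) : Set (ℕ × ℤ) :=
  match S with
  | .A n =>
    {jl | 1 ≤ jl.1 ∧ jl.1 ≤ n ∧
      pt p jl.1 = ((jl.1 : ℝ), (jl.2 : ℝ)) ∧
      (pt p (jl.1 - 1)).2 = (jl.2 : ℝ) + (if up then 1 else -1) ∧
      (pt p (jl.1 + 1)).2 = (jl.2 : ℝ) + (if up then 1 else -1)}
  | .B n ε =>
    {jl | jl ∈ XB n ∧
      ((∃ r : ℕ, 1 ≤ r ∧ r + 1 < p.length ∧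
          pt p r = (((iotaB n jl).1 : ℝ), ((iotaB n jl).2 : ℝ)) ∧
          (iotaB n jl).1 ≠ 0 ∧ (iotaB n jl).1 ≠ 2 * (n : ℤ) - 1 ∧
          (iotaB n jl).1 ≠ 4 * (n : ℤ) - 2 ∧
          (if up then (pt p r).2 < (pt p (r - 1)).2 ∧ (pt p r).2 < (pt p (r + 1)).2
           else (pt p (r - 1)).2 < (pt p r).2 ∧ (pt p (r + 1)).2 < (pt p r).2))
       ∨ (jl.1 = n ∧
          (if up then (2 * (n : ℝ) - 1, (jl.2 : ℝ) - ε) ∈ p ∧ (2 * (n : ℝ) - 1, (jl.2 : ℝ) + ε) ∉ p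
           else (2 * (n : ℝ) - 1, (jl.2 : ℝ) + ε) ∈ p ∧ (2 * (n : ℝ) - 1, (jl.2 : ℝ) - ε) ∉ p)))}

/-- `p'` is obtained from `p` by replacing the point `q` by the point `q'`. -/
def Replace1 (p p' : List (ℝ × ℝ)) (q q' : ℝ × ℝ) : Prop :=
  ∃ r : ℕ, r < p.length ∧ pt p r = q ∧ p'.length = p.length ∧ pt p' r = q' ∧
    ∀ s, s < p.length → s ≠ r → pt p' s = pt p s

/-- `p'` is obtained from `p` by replacing the point `q1` by `q1'` and the point `q2` by `q2'`. -/
def Replace2 (p p' : List (ℝ × ℝ)) (q1 q1' q2 q2' : ℝ × ℝ) : Prop :=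
  ∃ r s : ℕ, r < p.length ∧ s < p.length ∧ r ≠ s ∧ pt p r = q1 ∧ pt p s = q2 ∧
    p'.length = p.length ∧ pt p' r = q1' ∧ pt p' s = q2' ∧
    ∀ u, u < p.length → u ≠ r → u ≠ s → pt p' u = pt p u

/-- The path `p` can be lowered at `(j, l)`: `(j, l - r_j) ∈ C_{p,+}` and
`(j, l + r_j) ∉ C_{p,+}`. -/
def CanLower (S : Setting) (p : List (ℝ × ℝ)) (j : ℕ) (l : ℤ) : Prop :=
  (j, l - (rr S j : ℤ)) ∈ Cp S p true ∧ (j, l + (rr S j : ℤ)) ∉ Cp S p true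

/-- `p'` is the result of the lowering move at `(j,l)` applied to the path `p ∈ 𝒫_{i,k}`;
written `p' = p 𝒜_{j,l}⁻¹`. -/
def LoweredTo (S : Setting) (i : ℕ) (k : ℤ) (j : ℕ) (l : ℤ)
    (p p' : List (ℝ × ℝ)) : Prop :=
  p ∈ P S i k ∧ p' ∈ P S i k ∧ CanLower S p j l ∧
  (match S with
   | .A _ => Replace1 p p' ((j : ℝ), (l : ℝ) - 1) ((j : ℝ), (l : ℝ) + 1)
   | .B n ε =>
     if j = n then
       Replace1 p p' (2 * (n : ℝ) - 1, (l : ℝ) - 1 - ε) (2 * (n : ℝ) - 1, (l : ℝ) + 1 + ε)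
     else if j = n - 1 then
       Replace2 p p'
         (((iotaB n (j, l - 2)).1 : ℝ), (l : ℝ) - 2) (((iotaB n (j, l - 2)).1 : ℝ), (l : ℝ) + 2)
         (2 * (n : ℝ) - 1, (l : ℝ) - 1 + ε) (2 * (n : ℝ) - 1, (l : ℝ) + 1 - ε)
     else
       Replace1 p p'
         (((iotaB n (j, l - 2)).1 : ℝ), (l : ℝ) - 2) (((iotaB n (j, l - 2)).1 : ℝ), (l : ℝ) + 2))

/-- The path `p` can be raised at `(j,l)`: it is of the form `p' 𝒜_{j,l}⁻¹`. -/
def CanRaise (S : Setting) (i : ℕ) (k : ℤ) (p : List (ℝ × ℝ)) (j : ℕ) (l : ℤ) : Prop :=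
  ∃ p', LoweredTo S i k j l p' p

/-- The monomial group `ℳ`, realised as exponent functions: the free abelian group on the
symbols `Y_{i,k}`, `(i,k) ∈ X`, is identified with finitely supported functions `(ℕ × ℤ) → ℤ`,
written additively. -/
def Y (x : ℕ × ℤ) : (ℕ × ℤ) → ℤ := fun z => if z = x then 1 else 0

noncomputable def ind (s : Prop) : ℤ := @ite ℤ s (Classical.propDecidable s) 1 0

/-- The monomial `m(p)` of a path: `∏ Y_{j,l}` over upper corners times `∏ Y_{j,l}⁻¹`
over lower corners. -/
noncomputable def mon (S : Setting) (p : List (ℝ × ℝ)) : (ℕ × ℤ) → ℤ :=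
  fun x => ind (x ∈ Cp S p true) - ind (x ∈ Cp S p false)

/-- The monomials `A_{j,l}`, with the conventions `Y_{0,·} = Y_{N+1,·} = 1`. -/
def Amon (S : Setting) (j : ℕ) (l : ℤ) : (ℕ × ℤ) → ℤ :=
  match S with
  | .A n =>
      Y (j, l + 1) + Y (j, l - 1) - (if j = 1 then 0 else Y (j - 1, l))
        - (if j = n then 0 else Y (j + 1, l))
  | .B n _ =>
      if j = n then Y (n, l + 1) + Y (n, l - 1) - Y (n - 1, l)
      else if j = n - 1 then
        Y (n - 1, l + 2) + Y (n - 1, l - 2) - (if j = 1 then 0 else Y (n - 2, l))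
          - Y (n, l + 1) - Y (n, l - 1)
      else
        Y (j, l + 2) + Y (j, l - 2) - (if j = 1 then 0 else Y (j - 1, l)) - Y (j + 1, l)

/-- A monomial is dominant iff all its exponents are nonnegative. -/
def Dominant (m : (ℕ × ℤ) → ℤ) : Prop := ∀ x, 0 ≤ m x

/-- A monomial is anti-dominant iff all its exponents are nonpositive. -/
def AntiDominant (m : (ℕ × ℤ) → ℤ) : Prop := ∀ x, m x ≤ 0

/-- `(i',k')` is in snake position with respect to `(i,k)`. -/
def SnakePos : Setting → ℕ × ℤ → ℕ × ℤ → Prop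
  | .A _, ik, ik' => |(ik'.1 : ℤ) - (ik.1 : ℤ)| + 2 ≤ ik'.2 - ik.2
  | .B n _, ik, ik' =>
      if ik.1 = n ∧ ik'.1 = n then
        2 ≤ ik'.2 - ik.2 ∧ (ik'.2 - ik.2) % 4 = 2
      else if ik.1 = n ∨ ik'.1 = n then
        2 * |(ik'.1 : ℤ) - (ik.1 : ℤ)| + 3 ≤ ik'.2 - ik.2 ∧
          (ik'.2 - ik.2) % 4 = (2 * |(ik'.1 : ℤ) - (ik.1 : ℤ)| - 1) % 4
      else
        2 * |(ik'.1 : ℤ) - (ik.1 : ℤ)| + 4 ≤ ik'.2 - ik.2 ∧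
          (ik'.2 - ik.2) % 4 = (2 * |(ik'.1 : ℤ) - (ik.1 : ℤ)|) % 4

/-- A snake: a sequence of points of `X`, each in snake position w.r.t. the previous one. -/
def IsSnake (S : Setting) {T : ℕ} (w : Fin T → ℕ × ℤ) : Prop :=
  (∀ t, w t ∈ X S) ∧
  ∀ (t : Fin T) (h : (t : ℕ) + 1 < T), SnakePos S (w t) (w ⟨(t : ℕ) + 1, h⟩)

/-- `p` is strictly above `p'`. -/
def StrictlyAbove (p p' : List (ℝ × ℝ)) : Prop :=
  ∀ a ∈ p, ∀ b ∈ p', a.1 = b.1 → a.2 < b.2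

/-- A tuple of paths is non-overlapping. -/
def NonOverlapping {T : ℕ} (ps : Fin T → List (ℝ × ℝ)) : Prop :=
  ∀ s t : Fin T, s < t → StrictlyAbove (ps s) (ps t)

/-- The set `𝒫̄` of non-overlapping tuples of paths attached to a snake. -/
def PBar (S : Setting) {T : ℕ} (w : Fin T → ℕ × ℤ) : Set (Fin T → List (ℝ × ℝ)) :=
  {ps | (∀ t, ps t ∈ P S (w t).1 (w t).2) ∧ NonOverlapping ps}

/-- The product `∏_t m(p_t)` of the monomials of a tuple of paths. -/
noncomputable def tmon (S : Setting) {T : ℕ} (ps : Fin T → List (ℝ × ℝ)) : (ℕ × ℤ) → ℤ :=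
  ∑ t, mon S (ps t)

/-- Lowering move at `jl` on a tuple of paths: one component is lowered, the others
are unchanged. -/
def TLoweredTo (S : Setting) {T : ℕ} (w : Fin T → ℕ × ℤ) (jl : ℕ × ℤ)
    (ps ps' : Fin T → List (ℝ × ℝ)) : Prop :=
  ∃ t, LoweredTo S (w t).1 (w t).2 jl.1 jl.2 (ps t) (ps' t) ∧ ∀ s, s ≠ t → ps' s = ps s

/-- Sequences of raising/lowering moves on a single path; the list records, for each move,
whether it was a lowering move (`true`) or a raising move (`false`), and its site. -/
inductive MoveSeq (S : Setting) (i : ℕ) (k : ℤ) :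
    List (ℝ × ℝ) → List (ℝ × ℝ) → List (Bool × (ℕ × ℤ)) → Prop where
  | nil (p : List (ℝ × ℝ)) : MoveSeq S i k p p []
  | lower {p q r : List (ℝ × ℝ)} {jl : ℕ × ℤ} {ms : List (Bool × (ℕ × ℤ))} :
      jl ∈ W S → LoweredTo S i k jl.1 jl.2 p q → MoveSeq S i k q r ms →
      MoveSeq S i k p r ((true, jl) :: ms)
  | raise {p q r : List (ℝ × ℝ)} {jl : ℕ × ℤ} {ms : List (Bool × (ℕ × ℤ))} :
      jl ∈ W S → LoweredTo S i k jl.1 jl.2 q p → MoveSeq S i k q r ms →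
      MoveSeq S i k p r ((false, jl) :: ms)

/-- Sequences of raising/lowering moves on tuples of paths, all of whose intermediate
tuples are non-overlapping. -/
inductive TMoveSeq (S : Setting) {T : ℕ} (w : Fin T → ℕ × ℤ) :
    (Fin T → List (ℝ × ℝ)) → (Fin T → List (ℝ × ℝ)) → List (Bool × (ℕ × ℤ)) → Prop where
  | nil (ps : Fin T → List (ℝ × ℝ)) : TMoveSeq S w ps ps []
  | lower {ps qs rs : Fin T → List (ℝ × ℝ)} {jl : ℕ × ℤ} {ms : List (Bool × (ℕ × ℤ))} :
      jl ∈ W S → TLoweredTo S w jl ps qs → NonOverlapping qs →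
      TMoveSeq S w qs rs ms → TMoveSeq S w ps rs ((true, jl) :: ms)
  | raise {ps qs rs : Fin T → List (ℝ × ℝ)} {jl : ℕ × ℤ} {ms : List (Bool × (ℕ × ℤ))} :
      jl ∈ W S → TLoweredTo S w jl qs ps → NonOverlapping qs →
      TMoveSeq S w qs rs ms → TMoveSeq S w ps rs ((false, jl) :: ms)

/-- Sequences of lowering moves on tuples of paths, all of whose intermediate tuples
are non-overlapping; the list records the sites, in order. -/
inductive TLowerSeq (S : Setting) {T : ℕ} (w : Fin T → ℕ × ℤ) :
    (Fin T → List (ℝ × ℝ)) → (Fin T → List (ℝ × ℝ)) → List (ℕ × ℤ) → Prop where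
  | nil (ps : Fin T → List (ℝ × ℝ)) : TLowerSeq S w ps ps []
  | cons {ps qs rs : Fin T → List (ℝ × ℝ)} {jl : ℕ × ℤ} {ms : List (ℕ × ℤ)} :
      jl ∈ W S → TLoweredTo S w jl ps qs → NonOverlapping qs →
      TLowerSeq S w qs rs ms → TLowerSeq S w ps rs (jl :: ms)

/-- Weak order on paths with the same x-coordinates: `p` is weakly above `p'`. -/
def WeaklyAbove (p p' : List (ℝ × ℝ)) : Prop :=
  p.length = p'.length ∧ ∀ r, r < p.length → (pt p r).2 ≤ (pt p' r).2

/-- `p` is weakly below `p'`. -/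
def WeaklyBelow (p p' : List (ℝ × ℝ)) : Prop :=
  p.length = p'.length ∧ ∀ r, r < p.length → (pt p' r).2 ≤ (pt p r).2

/-- The path `top(p, p')`. -/
def topPath (p p' : List (ℝ × ℝ)) : List (ℝ × ℝ) :=
  List.zipWith (fun a b => (a.1, min a.2 b.2)) p p'

/-- The distinguished point contained in the highest path `p⁺_{i,k}`. -/
def highPoint : Setting → ℕ → ℤ → ℝ × ℝ
  | .A _, i, k => ((i : ℝ), (k : ℝ))
  | .B n ε, i, k =>
      if i = n then (2 * (n : ℝ) - 1, (k : ℝ) - ε)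
      else (((iotaB n (i, k)).1 : ℝ), ((iotaB n (i, k)).2 : ℝ))

/-- The distinguished point contained in the lowest path `p⁻_{i,k}`. -/
def lowPoint : Setting → ℕ → ℤ → ℝ × ℝ
  | .A n, i, k => ((n : ℝ) + 1 - (i : ℝ), (k : ℝ) + (n : ℝ) + 1)
  | .B n ε, i, k =>
      if i = n then (2 * (n : ℝ) - 1, (k : ℝ) + 4 * (n : ℝ) - 2 + ε)
      else (((iotaB n (i, k + 4 * (n : ℤ) - 2)).1 : ℝ),
            ((iotaB n (i, k + 4 * (n : ℤ) - 2)).2 : ℝ))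

/-- The highest path `p⁺_{i,k}` : the path of `𝒫_{i,k}` with no lower corners. -/
noncomputable def highestPath (S : Setting) (i : ℕ) (k : ℤ) : List (ℝ × ℝ) :=
  Classical.epsilon fun p => p ∈ P S i k ∧ Cp S p false = ∅

/-- The lowest path `p⁻_{i,k}` : the path of `𝒫_{i,k}` with no upper corners. -/
noncomputable def lowestPath (S : Setting) (i : ℕ) (k : ℤ) : List (ℝ × ℝ) :=
  Classical.epsilon fun p => p ∈ P S i k ∧ Cp S p true = ∅


theorem ind_pos {s : Prop} (h : s) : ind s = 1 := by unfold ind; exact if_pos h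
theorem ind_neg {s : Prop} (h : ¬ s) : ind s = 0 := by unfold ind; exact if_neg h
theorem ind_or {s t : Prop} (h : ¬ (s ∧ t)) : ind (s ∨ t) = ind s + ind t := by
  by_cases hs : s <;> by_cases ht : t
  · exact absurd ⟨hs, ht⟩ h
  · rw [ind_pos (Or.inl hs), ind_pos hs, ind_neg ht]; rfl
  · rw [ind_pos (Or.inr ht), ind_pos ht, ind_neg hs]; rfl
  · rw [ind_neg (by tauto), ind_neg hs, ind_neg ht]; rfl
theorem ind_congr {s t : Prop} (h : s ↔ t) : ind s = ind t := by rw [propext h]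
theorem ind_swap (s t : Prop) : ind (s ∧ ¬ t) - ind (t ∧ ¬ s) = ind s - ind t := by
  by_cases hs : s <;> by_cases ht : t <;> simp [ind, hs, ht]

/-- condition on corners -/
def cnr (up : Bool) (u v w : ℝ) : Prop :=
  if up then v < u ∧ v < w else u < v ∧ w < v

/-- corner value -/
noncomputable def cv (u v w : ℝ) (c : ℤ) : ℤ :=
  ind (v = c ∧ cnr true u v w) - ind (v = c ∧ cnr false u v w)

theorem cv_up {u v w : ℝ} {c z : ℤ} (hv : v = z) (h1 : v < u) (h2 : v < w) :
    cv u v w c = if c = z then 1 else 0 := by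
  subst hv
  unfold cv
  rw [ind_neg (s := (z : ℝ) = c ∧ cnr false u z w) (by simp only [cnr]; rintro ⟨-, h⟩; simp at h; linarith)]
  by_cases h : c = z
  · subst h; rw [ind_pos (by simp [cnr, h1, h2])]; simp
  · rw [ind_neg (by rintro ⟨h', -⟩; exact h (by exact_mod_cast h'.symm))]; simp [h]

theorem cv_down {u v w : ℝ} {c z : ℤ} (hv : v = z) (h1 : u < v) (h2 : w < v) :
    cv u v w c = - if c = z then 1 else 0 := by
  subst hv
  unfold cv
  rw [ind_neg (s := (z : ℝ) = c ∧ cnr true u z w) (by simp only [cnr]; rintro ⟨-, h⟩; simp at h; linarith)]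
  by_cases h : c = z
  · subst h; rw [ind_pos (by simp [cnr, h1, h2])]; simp
  · rw [ind_neg (by rintro ⟨h', -⟩; exact h (by exact_mod_cast h'.symm))]; simp [h]

theorem cv_flat {u v w : ℝ} {c : ℤ} (h1 : u < v) (h2 : v < w) :
    cv u v w c = 0 := by
  unfold cv cnr
  rw [ind_neg (by simp; intros; linarith), ind_neg (by simp; intros; linarith)]; rfl

theorem cv_comm (u v w : ℝ) (c : ℤ) : cv u v w c = cv w v u c := by
  unfold cv cnr
  simp only [and_comm]

theorem cv_right {u v w w' : ℝ} {c z : ℤ} (hv : v = z) (h1 : w < v) (h2 : v < w')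
    (hu : u < v ∨ v < u) :
    cv u v w' c = cv u v w c + if c = z then 1 else 0 := by
  rcases hu with hu | hu
  · rw [cv_flat hu h2, cv_down hv hu h1]; simp
  · rw [cv_comm u v w, cv_flat h1 hu, cv_up hv hu h2]; simp

theorem cv_left {u v w w' : ℝ} {c z : ℤ} (hv : v = z) (h1 : w < v) (h2 : v < w')
    (hu : u < v ∨ v < u) :
    cv w' v u c = cv w v u c + if c = z then 1 else 0 := by
  rw [cv_comm w', cv_comm w]; exact cv_right hv h1 h2 hu

/-! ### type A -/

theorem monA (n i : ℕ) (k : ℤ) (p : List (ℝ × ℝ)) (hp : p ∈ pathsA n i k) (x : ℕ × ℤ) :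
    mon (.A n) p x = if 1 ≤ x.1 ∧ x.1 ≤ n then
      cv (pt p (x.1 - 1)).2 (pt p x.1).2 (pt p (x.1 + 1)).2 x.2 else 0 := by
  obtain ⟨j, c⟩ := x
  obtain ⟨hl, hx, h0, h1, hs⟩ := hp
  change ind (1 ≤ j ∧ j ≤ n ∧ pt p j = ((j : ℝ), (c : ℝ)) ∧ (pt p (j - 1)).2 = (c : ℝ) + (if true then 1 else -1) ∧
      (pt p (j + 1)).2 = (c : ℝ) + (if true then 1 else -1)) -
    ind (1 ≤ j ∧ j ≤ n ∧ pt p j = ((j : ℝ), (c : ℝ)) ∧ (pt p (j - 1)).2 = (c : ℝ) + (if false then 1 else -1) ∧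
      (pt p (j + 1)).2 = (c : ℝ) + (if false then 1 else -1)) = if 1 ≤ j ∧ j ≤ n then
      cv (pt p (j - 1)).2 (pt p j).2 (pt p (j + 1)).2 c else 0
  by_cases h : 1 ≤ j ∧ j ≤ n
  · rw [if_pos h]
    obtain ⟨h1, h2⟩ := h
    have e1 := hs (j - 1) (by omega)
    have e2 := hs j (by omega)
    rw [show j - 1 + 1 = j by omega] at e1
    have ex := hx j (by omega)
    unfold cv cnr
    congr 1 <;> apply ind_congr
    · simp only [h1, h2, true_and, Prod.ext_iff, ex, if_true]
      constructor
      · rintro ⟨a, b, d⟩; refine ⟨a, ?_, ?_⟩ <;> linarith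
      · rintro ⟨a, b, d⟩; refine ⟨a, ?_, ?_⟩ <;> rcases e1 with e1 | e1 <;> rcases e2 with e2 | e2 <;> linarith
    · simp only [h1, h2, true_and, Prod.ext_iff, ex]
      simp only [Bool.false_eq_true, if_false]
      constructor
      · rintro ⟨a, b, d⟩; refine ⟨a, ?_, ?_⟩ <;> linarith
      · rintro ⟨a, b, d⟩; refine ⟨a, ?_, ?_⟩ <;> rcases e1 with e1 | e1 <;> rcases e2 with e2 | e2 <;> linarith
  · rw [if_neg h, ind_neg (by tauto), ind_neg (by tauto)]; rfl

theorem lowerA (n i : ℕ) (k : ℤ) (j : ℕ) (l : ℤ) (p p' : List (ℝ × ℝ))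
    (hj1 : 1 ≤ j) (hjn : j ≤ n)
    (h : LoweredTo (.A n) i k j l p p') : mon (.A n) p' = mon (.A n) p - Amon (.A n) j l := by
  obtain ⟨hp, hp', -, r, hr, hpr, hlen, hpr', hoth⟩ := h
  change p ∈ pathsA n i k at hp
  change p' ∈ pathsA n i k at hp'
  ext ⟨m, c⟩
  rw [Pi.sub_apply, monA n i k p hp, monA n i k p' hp']
  obtain ⟨hl, hx, h0, h1, hs⟩ := hp
  obtain ⟨hl', hx', h0', h1', hs'⟩ := hp'
  have : r = j := by
    have := hx r (by omega)
    rw [hpr] at this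
    dsimp only at this
    exact_mod_cast this.symm
  subst this
  have E1 := hs (r-1) (by omega)
  have E1' := hs' (r-1) (by omega)
  have E2 := hs r (by omega)
  have E2' := hs' r (by omega)
  rw [show r - 1 + 1 = r by omega] at E1 E1'
  have F1 := hoth (r-1) (by omega) (by omega)
  have F2 := hoth (r+1) (by omega) (by omega)
  rw [F1, hpr'] at E1'
  rw [F2, hpr'] at E2'
  rw [hpr] at E1 E2
  simp only at E1 E2 E1' E2'
  have G1 : (pt p (r-1)).2 = l := by
    rcases E1 with h | h <;> rcases E1' with h' | h' <;> linarith
  have G2 : (pt p (r+1)).2 = l := by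
    rcases E2 with h | h <;> rcases E2' with h' | h' <;> linarith
  dsimp only
  unfold Amon
  dsimp only
  by_cases hm : 1 ≤ m ∧ m ≤ n
  swap
  · rw [if_neg hm, if_neg hm]
    have a1 : m ≠ r := by omega
    have a2 : r ≠ 1 → m ≠ r - 1 := by omega
    have a3 : r ≠ n → m ≠ r + 1 := by omega
    by_cases b1 : r = 1 <;> by_cases b2 : r = n <;> simp_all [Y]
  rw [if_pos hm, if_pos hm]
  obtain ⟨hm1, hm2⟩ := hm
  rcases lt_trichotomy m r with hmr | hmr | hmr
  · rw [hoth (m-1) (by omega) (by omega), hoth m (by omega) (by omega)]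
    by_cases e : m + 1 = r
    · obtain rfl : m = r - 1 := by omega
      rw [show r - 1 + 1 = r by omega, hpr, hpr']
      have E0 := hs (r-1-1) (by omega)
      rw [show r - 1 - 1 + 1 = r - 1 by omega] at E0
      rw [cv_right (z := l) G1 (w := (l:ℝ)-1) (w' := l+1) (by linarith) (by linarith)
        (by rcases E0 with h | h <;> [left; right] <;> linarith)]
      have a1 : r ≠ 1 := by omega
      have a2 : r - 1 ≠ r + 1 := by omega
      have a3 : r - 1 ≠ r := by omega
      by_cases b2 : r = n <;> simp_all [Y]
    · rw [hoth (m+1) (by omega) (by omega)]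
      have a1 : m ≠ r := by omega
      have a2 : m ≠ r - 1 := by omega
      have a3 : m ≠ r + 1 := by omega
      by_cases b1 : r = 1 <;> by_cases b2 : r = n <;> simp_all [Y]
  · subst hmr
    rw [F1, F2, hpr, hpr', cv_down (z := l + 1) (by push_cast; rfl) (by simp only; linarith) (by simp only; linarith),
      cv_up (z := l - 1) (by push_cast; rfl) (by simp only; linarith) (by simp only; linarith)]
    have a2 : m ≠ m - 1 := by omega
    have y1 : ∀ z, (if m = 1 then 0 else Y (m - 1, z)) (m, c) = 0 := by
      intro z; split_ifs <;> simp [Y, a2]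
    have y2 : ∀ z, (if m = n then 0 else Y (m + 1, z)) (m, c) = 0 := by
      intro z; split_ifs <;> simp [Y]
    simp only [Pi.add_apply, Pi.sub_apply, y1, y2]
    simp only [Y, Prod.mk.injEq, true_and]
    ring
  · rw [hoth (m+1) (by omega) (by omega), hoth m (by omega) (by omega)]
    by_cases e : m = r + 1
    · subst e
      rw [show r + 1 - 1 = r by omega, hpr, hpr']
      have E0 := hs (r+1) (by omega)
      rw [cv_left (z := l) G2 (w := (l:ℝ)-1) (w' := l+1) (by linarith) (by linarith)
        (by rcases E0 with h | h <;> [right; left] <;> linarith)]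
      have a1 : r ≠ n := by omega
      have a2 : r + 1 ≠ r - 1 := by omega
      by_cases b1 : r = 1 <;> simp_all [Y]
    · rw [hoth (m-1) (by omega) (by omega)]
      have a1 : m ≠ r := by omega
      have a2 : m ≠ r - 1 := by omega
      have a3 : m ≠ r + 1 := by omega
      by_cases b1 : r = 1 <;> by_cases b2 : r = n <;> simp_all [Y]

/-! ### type B -/

/-- monomial of a spin path -/
noncomputable def mspin (n : ℕ) (ε : ℝ) (f : ℕ → ℝ) (x : ℕ × ℤ) : ℤ :=
  if x.1 = n then ind (f n = x.2 - ε) - ind (f n = x.2 + ε)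
  else if 1 ≤ x.1 ∧ x.1 < n then cv (f (x.1 - 1)) (f x.1) (f (x.1 + 1)) x.2 else 0

/-- step conditions -/
def StepB (n : ℕ) (ε : ℝ) (f : ℕ → ℝ) : Prop :=
  (∀ r, r + 2 ≤ n → f (r + 1) - f r = 2 ∨ f (r + 1) - f r = -2) ∧
    (f n - f (n - 1) = 1 + ε ∨ f n - f (n - 1) = -(1 + ε))

theorem mspin_congr {n : ℕ} {ε : ℝ} {f g : ℕ → ℝ} (h : ∀ s, s ≤ n → f s = g s) (x : ℕ × ℤ) :
    mspin n ε f x = mspin n ε g x := by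
  unfold mspin
  rw [h n le_rfl]
  split_ifs with h1 h2
  · rfl
  · rw [h _ (by omega), h _ (by omega), h _ (by omega)]
  · rfl

theorem col_minus {ε v : ℝ} (h0 : 0 < ε) (h1 : ε < 1 / 2) {c z : ℤ} (hv : v = z - ε) :
    ind (v = c - ε) - ind (v = c + ε) = if c = z then 1 else 0 := by
  have a2 : ¬ (v = c + ε) := by
    intro h
    have e1 : (c : ℝ) < z := by linarith
    have e2 : (z : ℝ) < c + 1 := by linarith
    norm_cast at e1 e2
    omega
  rw [ind_neg a2]
  by_cases h : c = z
  · subst h; rw [ind_pos hv]; simp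
  · rw [ind_neg]
    · simp [h]
    · intro h'
      apply h
      have : (c : ℝ) = z := by linarith
      exact_mod_cast this

theorem col_plus {ε v : ℝ} (h0 : 0 < ε) (h1 : ε < 1 / 2) {c z : ℤ} (hv : v = z + ε) :
    ind (v = c - ε) - ind (v = c + ε) = - if c = z then 1 else 0 := by
  have a2 : ¬ (v = c - ε) := by
    intro h
    have e1 : (z : ℝ) < c := by linarith
    have e2 : (c : ℝ) < z + 1 := by linarith
    norm_cast at e1 e2
    omega
  rw [ind_neg a2]
  by_cases h : c = z
  · subst h; rw [ind_pos hv]; simp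
  · rw [ind_neg]
    · simp [h]
    · intro h'
      apply h
      have : (c : ℝ) = z := by linarith
      exact_mod_cast this

theorem coreN {n : ℕ} {ε : ℝ} (hn : 2 ≤ n) (h0 : 0 < ε) (h1 : ε < 1 / 2) {f f' : ℕ → ℝ}
    (hf : StepB n ε f) (hf' : StepB n ε f') {l : ℤ} (a : f n = l - 1 - ε) (a' : f' n = l + 1 + ε)
    (hs : ∀ s, s ≤ n → s ≠ n → f' s = f s) (x : ℕ × ℤ) :
    mspin n ε f' x = mspin n ε f x - Amon (.B n ε) n l x := by
  obtain ⟨m, c⟩ := x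
  obtain ⟨s1, s2⟩ := hf
  obtain ⟨s1', s2'⟩ := hf'
  rw [hs (n - 1) (by omega) (by omega)] at s2'
  have G : f (n - 1) = l := by
    rcases s2 with h | h <;> rcases s2' with h' | h' <;> linarith
  unfold mspin Amon
  dsimp only
  rw [if_pos rfl]
  simp only [Pi.add_apply, Pi.sub_apply]
  by_cases hm : m = n
  · subst hm
    rw [if_pos rfl, if_pos rfl, col_plus h0 h1 (z := l + 1) (by push_cast; linarith),
      col_minus h0 h1 (z := l - 1) (by push_cast; linarith)]
    have : m ≠ m - 1 := by omega
    simp only [Y, Prod.mk.injEq, true_and, this, false_and, if_false]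
    ring
  · rw [if_neg hm, if_neg hm]
    simp only [Y, Prod.mk.injEq, hm, false_and, if_false]
    split_ifs with hm2 hm3 hm3
    · obtain ⟨rfl, rfl⟩ := hm3
      rw [show n - 1 + 1 = n by omega, hs (n - 1 - 1) (by omega) (by omega),
        hs (n - 1) (by omega) (by omega)]
      have E := s1 (n - 1 - 1) (by omega)
      rw [show n - 1 - 1 + 1 = n - 1 by omega] at E
      rw [cv_right (w := f n) (z := c) G (by linarith) (by linarith)
        (by rcases E with h | h <;> [left; right] <;> linarith)]
      simp
    · rw [hs (m - 1) (by omega) (by omega), hs m (by omega) (by omega)]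
      by_cases e : m + 1 = n
      · obtain rfl : m = n - 1 := by omega
        have hc : c ≠ l := by tauto
        have E := s1 (n - 1 - 1) (by omega)
        rw [show n - 1 - 1 + 1 = n - 1 by omega] at E
        rw [show n - 1 + 1 = n by omega]
        rw [cv_right (w := f n) (z := l) G (by linarith) (by linarith)
          (by rcases E with h | h <;> [left; right] <;> linarith)]
        simp [hc]
      · rw [hs (m + 1) (by omega) e]; simp
    · omega
    · simp

theorem coreM1 {n : ℕ} {ε : ℝ} (hn : 2 ≤ n) (h0 : 0 < ε) (h1 : ε < 1 / 2) {f f' : ℕ → ℝ}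
    (hf : StepB n ε f) (hf' : StepB n ε f') {l : ℤ} (a : f (n - 1) = l - 2)
    (a' : f' (n - 1) = l + 2) (b : f n = l - 1 + ε) (b' : f' n = l + 1 - ε)
    (hs : ∀ s, s ≤ n → s ≠ n - 1 → s ≠ n → f' s = f s) (x : ℕ × ℤ) :
    mspin n ε f' x = mspin n ε f x - Amon (.B n ε) (n - 1) l x := by
  obtain ⟨m, c⟩ := x
  obtain ⟨s1, s2⟩ := hf
  obtain ⟨s1', s2'⟩ := hf'
  have E := s1 (n - 1 - 1) (by omega)
  have E' := s1' (n - 1 - 1) (by omega)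
  rw [show n - 1 - 1 + 1 = n - 1 by omega] at E E'
  rw [hs (n - 1 - 1) (by omega) (by omega) (by omega)] at E'
  have G : f (n - 1 - 1) = l := by
    rcases E with h | h <;> rcases E' with h' | h' <;> linarith
  have nn : n - 1 ≠ n := by omega
  unfold mspin Amon
  dsimp only
  rw [if_neg nn, if_pos rfl]
  have y : (if n - 1 = 1 then 0 else Y (n - 2, l)) (m, c) =
      if (2 ≤ n - 1 ∧ m = n - 2 ∧ c = l) then 1 else 0 := by
    by_cases h : n - 1 = 1
    · rw [if_pos h, if_neg (by omega)]; rfl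
    · rw [if_neg h, Y]
      have : 2 ≤ n - 1 := by omega
      simp [this]
  simp only [Pi.add_apply, Pi.sub_apply, y]
  simp only [Y, Prod.mk.injEq]
  by_cases hm : m = n
  · subst hm
    rw [if_pos rfl, if_pos rfl, col_minus h0 h1 (z := l + 1) (by push_cast; linarith),
      col_plus h0 h1 (z := l - 1) (by push_cast; linarith)]
    have e1 : m ≠ m - 1 := by omega
    have e2 : m ≠ m - 2 := by omega
    simp only [true_and, e1, e2, false_and, and_false, if_false]
    ring
  · rw [if_neg hm, if_neg hm]
    simp only [hm, false_and, if_false]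
    by_cases hm2 : 1 ≤ m ∧ m < n
    swap
    · rw [if_neg hm2, if_neg hm2, if_neg (by omega), if_neg (by omega), if_neg (by omega)]; simp
    rw [if_pos hm2, if_pos hm2]
    by_cases e1 : m = n - 1
    · subst e1
      rw [show n - 1 + 1 = n by omega, hs (n - 1 - 1) (by omega) (by omega) (by omega),
        cv_down (z := l + 2) (by push_cast; linarith) (by linarith) (by linarith),
        cv_up (z := l - 2) (by push_cast; linarith) (by linarith) (by linarith)]
      have e2 : n - 1 ≠ n - 2 := by omega
      simp only [true_and, e2, false_and, and_false, if_false]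
      ring
    · simp only [e1, false_and, if_false]
      rw [hs (m - 1) (by omega) (by omega) (by omega), hs m (by omega) (by omega) (by omega)]
      by_cases e2 : m = n - 2
      · subst e2
        have q : 2 ≤ n - 1 := by omega
        have E0 := s1 (n - 2 - 1) (by omega)
        rw [show n - 2 - 1 + 1 = n - 2 by omega] at E0
        rw [show n - 1 - 1 = n - 2 by omega] at G
        rw [show n - 2 + 1 = n - 1 by omega,
          cv_right (w := f (n - 1)) (z := l) G (by linarith) (by linarith)
          (by rcases E0 with h | h <;> [left; right] <;> linarith)]
        simp [q]
      · rw [hs (m + 1) (by omega) (by omega) (by omega)]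
        simp [e2]

theorem coreMid {n : ℕ} {ε : ℝ} (h0 : 0 < ε) {f f' : ℕ → ℝ}
    (hf : StepB n ε f) (hf' : StepB n ε f') {l : ℤ} {j : ℕ} (hj : 1 ≤ j) (hjn : j + 1 < n)
    (a : f j = l - 2) (a' : f' j = l + 2)
    (hs : ∀ s, s ≤ n → s ≠ j → f' s = f s) (x : ℕ × ℤ) :
    mspin n ε f' x = mspin n ε f x - Amon (.B n ε) j l x := by
  obtain ⟨m, c⟩ := x
  obtain ⟨s1, s2⟩ := hf
  obtain ⟨s1', s2'⟩ := hf'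
  have E := s1 (j - 1) (by omega)
  have E' := s1' (j - 1) (by omega)
  rw [show j - 1 + 1 = j by omega] at E E'
  rw [hs (j - 1) (by omega) (by omega)] at E'
  have G : f (j - 1) = l := by
    rcases E with h | h <;> rcases E' with h' | h' <;> linarith
  have H := s1 j (by omega)
  have H' := s1' j (by omega)
  rw [hs (j + 1) (by omega) (by omega)] at H'
  have K : f (j + 1) = l := by
    rcases H with h | h <;> rcases H' with h' | h' <;> linarith
  have nn : j ≠ n := by omega
  have nn1 : j ≠ n - 1 := by omega
  unfold mspin Amon
  dsimp only
  rw [if_neg nn, if_neg nn1]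
  have y : (if j = 1 then 0 else Y (j - 1, l)) (m, c) =
      if (2 ≤ j ∧ m = j - 1 ∧ c = l) then 1 else 0 := by
    by_cases h : j = 1
    · rw [if_pos h, if_neg (by omega)]; rfl
    · rw [if_neg h, Y]
      have : 2 ≤ j := by omega
      simp [this]
  simp only [Pi.add_apply, Pi.sub_apply, y]
  simp only [Y, Prod.mk.injEq]
  by_cases hm : m = n
  · subst hm
    rw [if_pos rfl, if_pos rfl, hs m le_rfl (by omega)]
    rw [if_neg (by omega), if_neg (by omega), if_neg (by omega), if_neg (by omega)]; simp
  rw [if_neg hm, if_neg hm]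
  by_cases hm2 : 1 ≤ m ∧ m < n
  swap
  · rw [if_neg hm2, if_neg hm2, if_neg (by omega), if_neg (by omega), if_neg (by omega),
      if_neg (by omega)]; simp
  rw [if_pos hm2, if_pos hm2]
  by_cases e1 : m = j
  · subst e1
    rw [hs (m - 1) (by omega) (by omega), hs (m + 1) (by omega) (by omega),
      cv_down (z := l + 2) (by push_cast; linarith) (by linarith) (by linarith),
      cv_up (z := l - 2) (by push_cast; linarith) (by linarith) (by linarith)]
    have e2 : m ≠ m - 1 := by omega
    have e3 : m ≠ m + 1 := by omega
    simp only [true_and, e2, e3, false_and, and_false, if_false]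
    ring
  simp only [e1, false_and, if_false]
  rw [hs m (by omega) e1]
  by_cases e2 : m = j - 1
  · subst e2
    have q : 2 ≤ j := by omega
    have q' : j - 1 ≠ j + 1 := by omega
    have E0 := s1 (j - 1 - 1) (by omega)
    rw [show j - 1 - 1 + 1 = j - 1 by omega] at E0
    rw [show j - 1 + 1 = j by omega, hs (j - 1 - 1) (by omega) (by omega),
      cv_right (w := f j) (z := l) G (by linarith) (by linarith)
      (by rcases E0 with h | h <;> [left; right] <;> linarith)]
    simp [q, q']
  simp only [e2, false_and, and_false, if_false]
  rw [hs (m + 1) (by omega) (by omega)]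
  by_cases e3 : m = j + 1
  · subst e3
    have Z : f (j + 1) < f (j + 1 + 1) ∨ f (j + 1 + 1) < f (j + 1) := by
      by_cases q : j + 1 + 1 = n
      · rw [q]
        rw [show n - 1 = j + 1 by omega] at s2
        rcases s2 with h | h <;> [left; right] <;> linarith
      · rcases s1 (j + 1) (by omega) with h | h <;> [left; right] <;> linarith
    rw [show j + 1 - 1 = j by omega,
      cv_left (w := f j) (z := l) K (by linarith) (by linarith) Z.symm]
    simp
  · rw [hs (m - 1) (by omega) (by omega)]; simp [e3]

/-- second coordinates -/
def yy (p : List (ℝ × ℝ)) (r : ℕ) : ℝ := (pt p r).2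

theorem spin_step {n : ℕ} {ε : ℝ} {l : ℤ} {a : List (ℝ × ℝ)} (h : a ∈ pathsBspin n ε l) :
    StepB n ε (yy a) := ⟨h.2.2.2.2.1, h.2.2.2.2.2⟩

theorem spin_mod {n : ℕ} {ε : ℝ} {l : ℤ} {a : List (ℝ × ℝ)} (h : a ∈ pathsBspin n ε l) :
    ∀ r, r < n → ∃ z : ℤ, yy a r = ((l + 2 * n - 1 + 2 * r + 4 * z : ℤ) : ℝ) := by
  intro r
  induction r with
  | zero =>
    intro _
    refine ⟨0, ?_⟩
    have := h.2.2.2.1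
    unfold yy
    rw [this]; push_cast; ring
  | succ r ih =>
    intro hr
    obtain ⟨z, hz⟩ := ih (by omega)
    rcases (spin_step h).1 r (by omega) with e | e
    · refine ⟨z, ?_⟩
      rw [← sub_add_cancel (yy a (r + 1)) (yy a r), e, hz]; push_cast; ring
    · refine ⟨z - 1, ?_⟩
      rw [← sub_add_cancel (yy a (r + 1)) (yy a r), e, hz]; push_cast; ring

/-- x-coordinates as integers -/
theorem spin_x {n : ℕ} {ε : ℝ} {l : ℤ} {a : List (ℝ × ℝ)} (h : a ∈ pathsBspin n ε l)
    {r : ℕ} (hr : r ≤ n) :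
    (pt a r).1 = ((if r = n then 2 * (n : ℤ) - 1 else if l % 4 = 3 then 2 * (r : ℤ) else
      4 * (n : ℤ) - 2 - 2 * r : ℤ) : ℝ) := by
  obtain ⟨-, h1, h2, -⟩ := h
  by_cases e : r = n
  · subst e; rw [h2, if_pos rfl]; push_cast; rfl
  · rw [if_neg e]
    split_ifs at h1 ⊢
    · rw [h1 r (by omega)]; push_cast; rfl
    · rw [h1 r (by omega)]; push_cast; rfl

theorem spin_idxN {n : ℕ} {ε : ℝ} {l : ℤ} {a : List (ℝ × ℝ)} (h : a ∈ pathsBspin n ε l)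
    {r : ℕ} (hr : r ≤ n) (hx : (pt a r).1 = 2 * (n : ℝ) - 1) : r = n := by
  have hx' : (pt a r).1 = ((2 * (n : ℤ) - 1 : ℤ) : ℝ) := by rw [hx]; push_cast; rfl
  rw [spin_x h hr] at hx'
  have hx2 := Int.cast_injective hx'
  split_ifs at hx2 <;> omega

theorem iota_fst {n j : ℕ} (c : ℤ) (h : j ≠ n) : (iotaB n (j, c)).1 =
    if (2 * (n : ℤ) + c - 2 * (j : ℤ)) % 4 = 2 then 2 * (j : ℤ) else 4 * (n : ℤ) - 2 - 2 * (j : ℤ) := by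
  unfold iotaB
  dsimp only
  rw [if_neg h]
  split_ifs <;> rfl

theorem spin_idx {n : ℕ} {ε : ℝ} {l : ℤ} {a : List (ℝ × ℝ)} (h : a ∈ pathsBspin n ε l)
    {r : ℕ} (hr : r ≤ n) {j : ℕ} {c : ℤ} (hj : 1 ≤ j) (hjn : j < n)
    (hx : (pt a r).1 = ((iotaB n (j, c)).1 : ℝ)) : r = j := by
  rw [spin_x h hr] at hx
  have hx2 := Int.cast_injective hx
  rw [iota_fst c (by omega)] at hx2
  split_ifs at hx2 <;> omega

theorem iota_snd (n : ℕ) (x : ℕ × ℤ) : (iotaB n x).2 = x.2 := by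
  unfold iotaB; split_ifs <;> rfl

theorem iota_ne {n j : ℕ} (c : ℤ) (hj : 1 ≤ j) (hjn : j < n) :
    (iotaB n (j, c)).1 ≠ 0 ∧ (iotaB n (j, c)).1 ≠ 2 * (n : ℤ) - 1 ∧
          (iotaB n (j, c)).1 ≠ 4 * (n : ℤ) - 2 := by
  unfold iotaB
  dsimp only
  rw [if_neg (by omega)]
  split_ifs <;> dsimp only <;> omega

theorem spin_pt {n : ℕ} {ε : ℝ} {l : ℤ} (hl : l % 2 = 1) {a : List (ℝ × ℝ)}
    (h : a ∈ pathsBspin n ε l)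
    {r : ℕ} (hr : r ≤ n) {j : ℕ} {c : ℤ} (hj : 1 ≤ j) (hjn : j < n) :
    pt a r = (((iotaB n (j, c)).1 : ℝ), ((iotaB n (j, c)).2 : ℝ)) ↔ r = j ∧ yy a j = c := by
  constructor
  · intro e
    obtain rfl := spin_idx (j := j) (c := c) h hr hj hjn (by rw [e])
    refine ⟨rfl, ?_⟩
    unfold yy
    rw [e, iota_snd]
  · rintro ⟨rfl, e⟩
    obtain ⟨z, hz⟩ := spin_mod h r hjn
    rw [hz] at e
    have e' := Int.cast_injective e
    apply Prod.ext
    · rw [spin_x h hr]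
      dsimp only
      congr 1
      have hrn : r ≠ n := by omega
      rw [iota_fst c hrn, if_neg hrn]
      split_ifs <;> omega
    · rw [iota_snd]
      change yy a r = _
      rw [hz, e]

theorem spin_even {n : ℕ} {ε : ℝ} {l : ℤ} (hl : l % 2 = 1) {a : List (ℝ × ℝ)}
    (h : a ∈ pathsBspin n ε l) {j : ℕ} {c : ℤ} (hjn : j < n) (e : yy a j = c) : c % 2 = 0 := by
  obtain ⟨z, hz⟩ := spin_mod h j hjn
  rw [hz] at e
  have e' := Int.cast_injective e
  omega

theorem spin_odd {n : ℕ} {ε : ℝ} (hn : 2 ≤ n) (h0 : 0 < ε) (h1 : ε < 1 / 2) {l : ℤ} (hl : l % 2 = 1)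
    {a : List (ℝ × ℝ)} (h : a ∈ pathsBspin n ε l) {c : ℤ}
    (e : yy a n = c - ε ∨ yy a n = c + ε) : c % 2 = 1 := by
  obtain ⟨z, hz⟩ := spin_mod h (n - 1) (by omega)
  generalize hw : l + 2 * n - 1 + 2 * ((n - 1 : ℕ) : ℤ) + 4 * z = w at hz
  have hw2 : w % 2 = 0 := by omega
  rcases (spin_step h).2 with s | s <;> rcases e with e | e
  · exfalso
    have q1 : (w + 1 : ℝ) < c := by linarith
    have q2 : (c : ℝ) < w + 2 := by linarith
    norm_cast at q1 q2
    omega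
  · have q1 : (c : ℝ) = w + 1 := by linarith
    norm_cast at q1
    omega
  · have q1 : (c : ℝ) = w - 1 := by linarith
    have : c = w - 1 := by exact_mod_cast q1
    omega
  · exfalso
    have q1 : (c + 1 : ℝ) < w := by linarith
    have q2 : (w : ℝ) < c + 2 := by linarith
    norm_cast at q1 q2
    omega

theorem mem_pt {p : List (ℝ × ℝ)} {x : ℝ × ℝ} : x ∈ p ↔ ∃ r, r < p.length ∧ pt p r = x := by
  rw [List.mem_iff_getElem]
  constructor
  · rintro ⟨r, hr, e⟩; exact ⟨r, hr, by unfold pt; rw [List.getD_eq_getElem _ _ hr, e]⟩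
  · rintro ⟨r, hr, e⟩; exact ⟨r, hr, by unfold pt at e; rwa [List.getD_eq_getElem _ _ hr] at e⟩

theorem spin_mem {n : ℕ} {ε : ℝ} {l : ℤ} {a : List (ℝ × ℝ)} (h : a ∈ pathsBspin n ε l) {y : ℝ} :
    (2 * (n : ℝ) - 1, y) ∈ a ↔ yy a n = y := by
  rw [mem_pt]
  constructor
  · rintro ⟨r, hr, e⟩
    rw [h.1] at hr
    obtain rfl := spin_idxN h (r := r) (by omega) (by rw [e])
    unfold yy; rw [e]
  · intro e
    exact ⟨n, by rw [h.1]; omega, Prod.ext h.2.2.1 e⟩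

theorem pt_app_left {n : ℕ} {a b : List (ℝ × ℝ)} (ha : a.length = n + 1)
    {r : ℕ} (hr : r ≤ n) : pt (a ++ b.reverse) r = pt a r := by
  unfold pt
  rw [List.getD_append]
  omega

theorem pt_app_right {n : ℕ} {a b : List (ℝ × ℝ)} (ha : a.length = n + 1) (hb : b.length = n + 1)
    {r : ℕ} (hr : r ≤ n) : pt (a ++ b.reverse) (2 * n + 1 - r) = pt b r := by
  unfold pt
  rw [List.getD_append_right _ _ _ _ (by omega), List.getD_eq_getElem _ _ (by simp; omega),
    List.getD_eq_getElem _ _ (by omega), List.getElem_reverse]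
  congr 1
  omega

theorem mem_CpB {n : ℕ} {ε : ℝ} {p : List (ℝ × ℝ)} {up : Bool} {j : ℕ} {c : ℤ} :
    (j, c) ∈ Cp (.B n ε) p up ↔ (((j = n ∧ c % 2 = 1) ∨ (1 ≤ j ∧ j < n ∧ c % 2 = 0)) ∧
      ((∃ r : ℕ, 1 ≤ r ∧ r + 1 < p.length ∧
          pt p r = (((iotaB n (j, c)).1 : ℝ), ((iotaB n (j, c)).2 : ℝ)) ∧
          (iotaB n (j, c)).1 ≠ 0 ∧ (iotaB n (j, c)).1 ≠ 2 * (n : ℤ) - 1 ∧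
          (iotaB n (j, c)).1 ≠ 4 * (n : ℤ) - 2 ∧
          cnr up (pt p (r - 1)).2 (pt p r).2 (pt p (r + 1)).2)
       ∨ (j = n ∧
          (if up then (2 * (n : ℝ) - 1, (c : ℝ) - ε) ∈ p ∧ (2 * (n : ℝ) - 1, (c : ℝ) + ε) ∉ p
           else (2 * (n : ℝ) - 1, (c : ℝ) + ε) ∈ p ∧ (2 * (n : ℝ) - 1, (c : ℝ) - ε) ∉ p)))) :=
  Iff.rfl

theorem mon_out {n : ℕ} {ε : ℝ} (p : List (ℝ × ℝ)) {j : ℕ} (c : ℤ) (h1 : j ≠ n)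
    (h2 : ¬ (1 ≤ j ∧ j < n)) : mon (.B n ε) p (j, c) = 0 := by
  unfold mon
  rw [ind_neg, ind_neg]
  · rfl
  all_goals rw [mem_CpB]; tauto

theorem mon_n_odd {n : ℕ} {ε : ℝ} (p : List (ℝ × ℝ)) {c : ℤ} (hc : c % 2 = 1) :
    mon (.B n ε) p (n, c) = ind ((2 * (n : ℝ) - 1, (c : ℝ) - ε) ∈ p) -
      ind ((2 * (n : ℝ) - 1, (c : ℝ) + ε) ∈ p) := by
  rw [← ind_swap]
  have : (iotaB n (n, c)).1 = 2 * (n : ℤ) - 1 := by unfold iotaB; rw [if_pos rfl]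
  unfold mon
  congr 1 <;> apply ind_congr <;> rw [mem_CpB] <;> simp [hc, this]

theorem mon_n_even {n : ℕ} {ε : ℝ} (p : List (ℝ × ℝ)) {c : ℤ} (hc : ¬ c % 2 = 1) :
    mon (.B n ε) p (n, c) = 0 := by
  unfold mon
  rw [ind_neg, ind_neg]
  · rfl
  all_goals rw [mem_CpB]; simp [hc]

theorem cnr_comm {up : Bool} {u v w : ℝ} : cnr up u v w ↔ cnr up w v u := by
  unfold cnr; cases up <;> simp [and_comm]

theorem spin_cp {n : ℕ} {ε : ℝ} {l : ℤ} (hl : l % 2 = 1) {a : List (ℝ × ℝ)}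
    (h : a ∈ pathsBspin n ε l) {j : ℕ} {c : ℤ} (hj : 1 ≤ j) (hjn : j < n) (up : Bool) :
    (j, c) ∈ Cp (.B n ε) a up ↔
      (yy a j = c ∧ cnr up (yy a (j - 1)) (yy a j) (yy a (j + 1))) := by
  rw [mem_CpB]
  constructor
  · rintro ⟨-, ⟨r, hr1, hr2, e, -, -, -, hc⟩ | ⟨h', -⟩⟩
    · rw [h.1] at hr2
      rw [spin_pt hl h (by omega) hj hjn] at e
      obtain ⟨rfl, e⟩ := e
      exact ⟨e, hc⟩
    · omega
  · rintro ⟨e, hc⟩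
    obtain ⟨i1, i2, i3⟩ := iota_ne c hj hjn
    exact ⟨Or.inr ⟨hj, hjn, spin_even hl h hjn e⟩, Or.inl ⟨j, hj, by rw [h.1]; omega,
      (spin_pt hl h (by omega) hj hjn).2 ⟨rfl, e⟩, i1, i2, i3, hc⟩⟩

theorem vec_cp {n : ℕ} {ε : ℝ} {l l' : ℤ} (hl : l % 2 = 1) (hl' : l' % 2 = 1)
    {a b : List (ℝ × ℝ)}
    (h : a ∈ pathsBspin n ε l) (h' : b ∈ pathsBspin n ε l')
    {j : ℕ} {c : ℤ} (hj : 1 ≤ j) (hjn : j < n) (up : Bool) :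
    (j, c) ∈ Cp (.B n ε) (a ++ b.reverse) up ↔
      (yy a j = c ∧ cnr up (yy a (j - 1)) (yy a j) (yy a (j + 1))) ∨
      (yy b j = c ∧ cnr up (yy b (j - 1)) (yy b j) (yy b (j + 1))) := by
  rw [mem_CpB]
  have hlen : (a ++ b.reverse).length = 2 * n + 2 := by simp [h.1, h'.1]; omega
  rw [hlen]
  constructor
  · rintro ⟨-, ⟨r, hr1, hr2, e, -, -, -, hc⟩ | ⟨h', -⟩⟩
    · by_cases hr : r ≤ n
      · left
        rw [pt_app_left h.1 hr, spin_pt hl h hr hj hjn] at e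
        obtain ⟨rfl, e⟩ := e
        rw [pt_app_left h.1 hr, pt_app_left h.1 (by omega), pt_app_left h.1 (by omega)] at hc
        exact ⟨e, hc⟩
      · right
        obtain ⟨s, hs, rfl⟩ : ∃ s, s ≤ n ∧ r = 2 * n + 1 - s := ⟨2 * n + 1 - r, by omega, by omega⟩
        rw [pt_app_right h.1 h'.1 hs, spin_pt hl' h' hs hj hjn] at e
        obtain ⟨rfl, e⟩ := e
        rw [show 2 * n + 1 - s - 1 = 2 * n + 1 - (s + 1) by omega,
          show 2 * n + 1 - s + 1 = 2 * n + 1 - (s - 1) by omega, pt_app_right h.1 h'.1 hs,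
          pt_app_right h.1 h'.1 (by omega), pt_app_right h.1 h'.1 (by omega)] at hc
        exact ⟨e, cnr_comm.1 hc⟩
    · omega
  · obtain ⟨i1, i2, i3⟩ := iota_ne c hj hjn
    rintro (⟨e, hc⟩ | ⟨e, hc⟩)
    · refine ⟨Or.inr ⟨hj, hjn, spin_even hl h hjn e⟩, Or.inl ⟨j, hj, by omega, ?_, i1, i2, i3, ?_⟩⟩
      · rw [pt_app_left h.1 (by omega)]
        exact (spin_pt hl h (by omega) hj hjn).2 ⟨rfl, e⟩
      · rw [pt_app_left h.1 (by omega), pt_app_left h.1 (by omega), pt_app_left h.1 (by omega)]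
        exact hc
    · refine ⟨Or.inr ⟨hj, hjn, spin_even hl' h' hjn e⟩, Or.inl ⟨2 * n + 1 - j, by omega, by omega,
        ?_, i1, i2, i3, ?_⟩⟩
      · rw [pt_app_right h.1 h'.1 (by omega)]
        exact (spin_pt hl' h' (by omega) hj hjn).2 ⟨rfl, e⟩
      · rw [show 2 * n + 1 - j - 1 = 2 * n + 1 - (j + 1) by omega,
          show 2 * n + 1 - j + 1 = 2 * n + 1 - (j - 1) by omega, pt_app_right h.1 h'.1 (by omega),
          pt_app_right h.1 h'.1 (by omega), pt_app_right h.1 h'.1 (by omega)]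
        exact cnr_comm.1 hc

theorem mon_spin {n : ℕ} {ε : ℝ} (hn : 2 ≤ n) (h0 : 0 < ε) (h1 : ε < 1 / 2) {l : ℤ} (hl : l % 2 = 1)
    {a : List (ℝ × ℝ)} (h : a ∈ pathsBspin n ε l) (x : ℕ × ℤ) :
    mon (.B n ε) a x = mspin n ε (yy a) x := by
  obtain ⟨j, c⟩ := x
  unfold mspin
  dsimp only
  split_ifs with e1 e2
  · subst e1
    by_cases hc : c % 2 = 1
    · rw [mon_n_odd a hc, ind_congr (spin_mem h), ind_congr (spin_mem h)]
    · rw [mon_n_even a hc, ind_neg, ind_neg]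
      · rfl
      · intro e; exact hc (spin_odd hn h0 h1 hl h (Or.inr e))
      · intro e; exact hc (spin_odd hn h0 h1 hl h (Or.inl e))
  · unfold mon cv
    rw [ind_congr (spin_cp hl h e2.1 e2.2 true), ind_congr (spin_cp hl h e2.1 e2.2 false)]
  · exact mon_out a c e1 e2

theorem mon_vec {n : ℕ} {ε : ℝ} (hn : 2 ≤ n) (h0 : 0 < ε) (h1 : ε < 1 / 2) {l l' : ℤ}
    (hl : l % 2 = 1) (hl' : l' % 2 = 1) (hll : (l - l') % 4 = 2)
    {a b : List (ℝ × ℝ)} (h : a ∈ pathsBspin n ε l) (h' : b ∈ pathsBspin n ε l')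
    (hab : 0 < yy a n - yy b n) (x : ℕ × ℤ) :
    mon (.B n ε) (a ++ b.reverse) x = mspin n ε (yy a) x + mspin n ε (yy b) x := by
  obtain ⟨j, c⟩ := x
  unfold mspin
  dsimp only
  split_ifs with e1 e2
  · subst e1
    by_cases hc : c % 2 = 1
    · have key : ∀ y, ind ((2 * (j : ℝ) - 1, y) ∈ a ++ b.reverse) =
          ind (yy a j = y) + ind (yy b j = y) := by
        intro y
        rw [← ind_or (by rintro ⟨e, e'⟩; linarith)]
        apply ind_congr
        rw [List.mem_append, List.mem_reverse, spin_mem h, spin_mem h']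
      rw [mon_n_odd _ hc, key, key]; ring
    · rw [mon_n_even _ hc, ind_neg, ind_neg, ind_neg, ind_neg]
      · rfl
      · intro e; exact hc (spin_odd hn h0 h1 hl' h' (Or.inr e))
      · intro e; exact hc (spin_odd hn h0 h1 hl' h' (Or.inl e))
      · intro e; exact hc (spin_odd hn h0 h1 hl h (Or.inr e))
      · intro e; exact hc (spin_odd hn h0 h1 hl h (Or.inl e))
  · have dis : ¬ (yy a j = c ∧ yy b j = c) := by
      rintro ⟨e, e'⟩
      obtain ⟨z, hz⟩ := spin_mod h j e2.2
      obtain ⟨z', hz'⟩ := spin_mod h' j e2.2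
      rw [hz] at e
      rw [hz'] at e'
      have q := Int.cast_injective e
      have q' := Int.cast_injective e'
      omega
    unfold mon cv
    rw [ind_congr (vec_cp hl hl' h h' e2.1 e2.2 true), ind_congr (vec_cp hl hl' h h' e2.1 e2.2 false),
      ind_or (by tauto), ind_or (by tauto)]
    ring
  · rw [mon_out _ c e1 e2]; rfl

theorem lowerB_spin {n : ℕ} {ε : ℝ} (hn : 2 ≤ n) (h0 : 0 < ε) (h1 : ε < 1 / 2) {k : ℤ}
    (hk : k % 2 = 1) (j : ℕ) (l : ℤ) (p p' : List (ℝ × ℝ)) (hj1 : 1 ≤ j) (hjn : j ≤ n)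
    (h : LoweredTo (.B n ε) n k j l p p') :
    mon (.B n ε) p' = mon (.B n ε) p - Amon (.B n ε) j l := by
  obtain ⟨hp, hp', -, h⟩ := h
  change p ∈ pathsB n ε n k at hp
  change p' ∈ pathsB n ε n k at hp'
  unfold pathsB at hp hp'
  rw [if_pos rfl] at hp hp'
  dsimp only at h
  have st := spin_step hp
  have st' := spin_step hp'
  ext x
  rw [Pi.sub_apply, mon_spin hn h0 h1 hk hp, mon_spin hn h0 h1 hk hp']
  split_ifs at h with c1 c2
  · subst c1
    obtain ⟨r, hr, e, -, e', hs⟩ := h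
    rw [hp.1] at hr hs
    obtain rfl := spin_idxN hp (r := r) (by omega) (by rw [e])
    exact coreN hn h0 h1 st st' (by unfold yy; rw [e]) (by unfold yy; rw [e'])
      (fun s a b => by unfold yy; rw [hs s (by omega) b]) x
  · obtain ⟨r, s, hr, hsl, hrs, e, f, -, e', f', hs⟩ := h
    rw [hp.1] at hr hs hsl
    obtain rfl := spin_idx hp (r := r) (by omega) (j := j) (c := l - 2) (by omega) (by omega) (by rw [e])
    obtain rfl := spin_idxN hp (r := s) (by omega) (by rw [f])
    subst c2
    exact coreM1 hn h0 h1 st st' (by unfold yy; rw [e]) (by unfold yy; rw [e'])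
      (by unfold yy; rw [f]) (by unfold yy; rw [f'])
      (fun s a b c => by unfold yy; rw [hs s (by omega) b c]) x
  · obtain ⟨r, hr, e, -, e', hs⟩ := h
    rw [hp.1] at hr hs
    obtain rfl := spin_idx hp (r := r) (by omega) (j := j) (c := l - 2) (by omega) (by omega) (by rw [e])
    exact coreMid h0 st st' hj1 (by omega) (by unfold yy; rw [e]) (by unfold yy; rw [e'])
      (fun s a b => by unfold yy; rw [hs s (by omega) b]) x

theorem split_idx {n r : ℕ} (hr : r < 2 * n + 2) : r ≤ n ∨ ∃ s, s ≤ n ∧ r = 2 * n + 1 - s := by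
  by_cases h : r ≤ n
  · exact Or.inl h
  · exact Or.inr ⟨2 * n + 1 - r, by omega, by omega⟩

theorem lowerB_vec {n : ℕ} {ε : ℝ} (hn : 2 ≤ n) (h0 : 0 < ε) (h1 : ε < 1 / 2) {i : ℕ} {k : ℤ}
    (hi : i ≠ n)
    (hk : k % 2 = 0) (j : ℕ) (l : ℤ) (p p' : List (ℝ × ℝ)) (hj1 : 1 ≤ j) (hjn : j ≤ n)
    (h : LoweredTo (.B n ε) i k j l p p') :
    mon (.B n ε) p' = mon (.B n ε) p - Amon (.B n ε) j l := by
  obtain ⟨hp, hp', -, h⟩ := h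
  change p ∈ pathsB n ε i k at hp
  change p' ∈ pathsB n ε i k at hp'
  unfold pathsB at hp hp'
  rw [if_neg hi] at hp hp'
  obtain ⟨a, b, ha, hb, rfl, -, hab⟩ := hp
  obtain ⟨a', b', ha', hb', rfl, -, hab'⟩ := hp'
  dsimp only at h
  have sa := spin_step ha
  have sa' := spin_step ha'
  have sb := spin_step hb
  have sb' := spin_step hb'
  have hlen : (a ++ b.reverse).length = 2 * n + 2 := by simp [ha.1, hb.1]; omega
  have L := fun (s : ℕ) (hs : s ≤ n) => pt_app_left (b := b) ha.1 hs
  have L' := fun (s : ℕ) (hs : s ≤ n) => pt_app_left (b := b') ha'.1 hs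
  have R := fun (s : ℕ) (hs : s ≤ n) => pt_app_right ha.1 hb.1 hs
  have R' := fun (s : ℕ) (hs : s ≤ n) => pt_app_right ha'.1 hb'.1 hs
  ext x
  rw [Pi.sub_apply, mon_vec hn h0 h1 (by omega) (by omega) (by omega) ha hb hab,
    mon_vec hn h0 h1 (by omega) (by omega) (by omega) ha' hb' hab']
  split_ifs at h with c1 c2
  · subst c1
    obtain ⟨r, hr, e, -, e', hs⟩ := h
    rw [hlen] at hr hs
    rcases split_idx hr with hr | ⟨s, hr', rfl⟩
    · rw [L r hr] at e
      rw [L' r hr] at e'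
      obtain rfl := spin_idxN ha hr (by rw [e])
      rw [mspin_congr (f := yy b') (g := yy b)
          (fun s q => by unfold yy; rw [← R s q, ← R' s q, hs _ (by omega) (by omega)]),
        coreN hn h0 h1 sa sa' (by unfold yy; rw [e]) (by unfold yy; rw [e'])
          (fun s q q' => by unfold yy; rw [← L s q, ← L' s q, hs s (by omega) q']) x]
      ring
    · rw [R s hr'] at e
      rw [R' s hr'] at e'
      obtain rfl := spin_idxN hb hr' (by rw [e])
      rw [mspin_congr (f := yy a') (g := yy a)
          (fun s q => by unfold yy; rw [← L s q, ← L' s q, hs _ (by omega) (by omega)]),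
        coreN hn h0 h1 sb sb' (by unfold yy; rw [e]) (by unfold yy; rw [e'])
          (fun s q q' => by unfold yy; rw [← R s q, ← R' s q, hs _ (by omega) (by omega)]) x]
      ring
  · obtain ⟨r, s, hr, hsl, hrs, e, f, -, e', f', hs⟩ := h
    rw [hlen] at hr hs hsl
    rcases split_idx hr with hr | ⟨r, hr', rfl⟩
    · rw [L r hr] at e
      rw [L' r hr] at e'
      obtain rfl := spin_idx ha hr (j := j) (c := l - 2) (by omega) (by omega) (by rw [e])
      have ey : yy a r = l - 2 := by unfold yy; rw [e]
      have ey' : yy a' r = l + 2 := by unfold yy; rw [e']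
      rcases split_idx hsl with hsl | ⟨s, hsl', rfl⟩
      · rw [L s hsl] at f
        rw [L' s hsl] at f'
        obtain rfl := spin_idxN ha hsl (by rw [f])
        subst c2
        rw [mspin_congr (f := yy b') (g := yy b)
            (fun s q => by unfold yy; rw [← R s q, ← R' s q, hs _ (by omega) (by omega) (by omega)]),
          coreM1 hn h0 h1 sa sa' ey ey' (by unfold yy; rw [f]) (by unfold yy; rw [f'])
            (fun s q q' q'' => by unfold yy; rw [← L s q, ← L' s q, hs s (by omega) q' q'']) x]
        ring
      · exfalso
        have := hs n (by omega) (by omega) (by omega)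
        rw [L n le_rfl, L' n le_rfl] at this
        have t : yy a' n = yy a n := by unfold yy; rw [this]
        have u := sa.2
        have u' := sa'.2
        rw [← c2] at u u'
        rcases u with u | u <;> rcases u' with u' | u' <;> linarith
    · rw [R r hr'] at e
      rw [R' r hr'] at e'
      obtain rfl := spin_idx hb hr' (j := j) (c := l - 2) (by omega) (by omega) (by rw [e])
      have ey : yy b r = l - 2 := by unfold yy; rw [e]
      have ey' : yy b' r = l + 2 := by unfold yy; rw [e']
      rcases split_idx hsl with hsl | ⟨s, hsl', rfl⟩
      · exfalso
        have := hs (2 * n + 1 - n) (by omega) (by omega) (by omega)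
        rw [R n le_rfl, R' n le_rfl] at this
        have t : yy b' n = yy b n := by unfold yy; rw [this]
        have u := sb.2
        have u' := sb'.2
        rw [← c2] at u u'
        rcases u with u | u <;> rcases u' with u' | u' <;> linarith
      · rw [R s hsl'] at f
        rw [R' s hsl'] at f'
        obtain rfl := spin_idxN hb hsl' (by rw [f])
        subst c2
        rw [mspin_congr (f := yy a') (g := yy a)
            (fun s q => by unfold yy; rw [← L s q, ← L' s q, hs _ (by omega) (by omega) (by omega)]),
          coreM1 hn h0 h1 sb sb' ey ey' (by unfold yy; rw [f]) (by unfold yy; rw [f'])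
            (fun s q q' q'' => by
              unfold yy; rw [← R s q, ← R' s q, hs _ (by omega) (by omega) (by omega)]) x]
        ring
  · obtain ⟨r, hr, e, -, e', hs⟩ := h
    rw [hlen] at hr hs
    rcases split_idx hr with hr | ⟨s, hr', rfl⟩
    · rw [L r hr] at e
      rw [L' r hr] at e'
      obtain rfl := spin_idx ha hr (j := j) (c := l - 2) (by omega) (by omega) (by rw [e])
      rw [mspin_congr (f := yy b') (g := yy b)
          (fun s q => by unfold yy; rw [← R s q, ← R' s q, hs _ (by omega) (by omega)]),
        coreMid h0 sa sa' hj1 (by omega) (by unfold yy; rw [e]) (by unfold yy; rw [e'])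
          (fun s q q' => by unfold yy; rw [← L s q, ← L' s q, hs s (by omega) q']) x]
      ring
    · rw [R s hr'] at e
      rw [R' s hr'] at e'
      obtain rfl := spin_idx hb hr' (j := j) (c := l - 2) (by omega) (by omega) (by rw [e])
      rw [mspin_congr (f := yy a') (g := yy a)
          (fun s q => by unfold yy; rw [← L s q, ← L' s q, hs _ (by omega) (by omega)]),
        coreMid h0 sb sb' hj1 (by omega) (by unfold yy; rw [e]) (by unfold yy; rw [e'])
          (fun s q q' => by unfold yy; rw [← R s q, ← R' s q, hs _ (by omega) (by omega)]) x]
      ring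

theorem lower_single (S : Setting) (hS : S.valid) (ik : ℕ × ℤ) (hik : ik ∈ X S)
    (jl : ℕ × ℤ) (hjl : jl ∈ W S) (p p' : List (ℝ × ℝ))
    (h : LoweredTo S ik.1 ik.2 jl.1 jl.2 p p') : mon S p' = mon S p - Amon S jl.1 jl.2 := by
  obtain ⟨i, k⟩ := ik
  obtain ⟨j, l⟩ := jl
  cases S with
  | A n => exact lowerA n i k j l p p' hjl.1 hjl.2.1 h
  | B n ε =>
    obtain ⟨hn, h0, h1⟩ := hS
    have hj : 1 ≤ j ∧ j ≤ n := by
      rcases hjl with ⟨e, -⟩ | ⟨e1, e2, -⟩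
      · dsimp only at e; omega
      · dsimp only at e1 e2; omega
    rcases hik with ⟨e, hk⟩ | ⟨e1, e2, hk⟩
    · dsimp only at e hk h
      subst e
      exact lowerB_spin hn h0 h1 hk j l p p' hj.1 hj.2 h
    · dsimp only at e1 e2 hk h
      exact lowerB_vec hn h0 h1 (by omega) hk j l p p' hj.1 hj.2 h

theorem tlower (S : Setting) (hS : S.valid) {T : ℕ}
    (w : Fin T → ℕ × ℤ) (hw : ∀ t, w t ∈ X S)
    (jl : ℕ × ℤ) (hjl : jl ∈ W S) (ps ps' : Fin T → List (ℝ × ℝ))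
    (h : TLoweredTo S w jl ps ps') : tmon S ps' = tmon S ps - Amon S jl.1 jl.2 := by
  obtain ⟨t, ht, hs⟩ := h
  unfold tmon
  rw [← Finset.add_sum_erase _ _ (Finset.mem_univ t),
    ← Finset.add_sum_erase _ (fun s => mon S (ps s)) (Finset.mem_univ t),
    lower_single S hS (w t) (hw t) jl hjl _ _ ht]
  rw [Finset.sum_congr rfl (g := fun s => mon S (ps s))
    (fun s q => by rw [hs s (Finset.ne_of_mem_erase q)])]
  abel

/-- if the tuple `(p'_t)` is obtained from `(p_t) ∈ 𝒫̄` by a lowering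
(resp. raising) move at `(j,ℓ) ∈ W`, then `∏ m(p'_t) = A_{j,ℓ}⁻¹ ∏ m(p_t)`
(resp. `∏ m(p'_t) = A_{j,ℓ} ∏ m(p_t)`) in the free abelian group `ℳ`
(written here additively in terms of exponents). -/
theorem stmt8 (S : Setting) (hS : S.valid) {T : ℕ} (hT : 1 ≤ T)
    (w : Fin T → ℕ × ℤ) (hw : IsSnake S w)
    (ps : Fin T → List (ℝ × ℝ)) (hps : ps ∈ PBar S w)
    (jl : ℕ × ℤ) (hjl : jl ∈ W S) (ps' : Fin T → List (ℝ × ℝ)) :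
    (TLoweredTo S w jl ps ps' → tmon S ps' = tmon S ps - Amon S jl.1 jl.2) ∧
    (TLoweredTo S w jl ps' ps → tmon S ps' = tmon S ps + Amon S jl.1 jl.2) := by
  refine ⟨fun h => tlower S hS w hw.1 jl hjl ps ps' h, fun h => ?_⟩
  rw [tlower S hS w hw.1 jl hjl ps' ps h]
  abel

end Paper
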